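/- arXiv:2307.01787 — 8 statements merged into one kernel-verified Lean document; each statement's English description precedes it below -/
import Mathlib

section
/- Let X be a finite set and S a subsemigroup of F(X). Then S is completely simple (i.e., S contains an idempotent and its only two-sided ideal is S itself) if and only if all elements of S have the same rank. -/
/-!
Rank cannot increase under composition, so the elements of `S` of rank at most that of a given `f`
form an ideal; if `S` is its own only ideal, this bounds every rank by that of `f`, and by symmetry
the rank is constant.

Conversely, suppose the rank is constant. By finiteness, if `s, u ∈ S` then `s ∘ u` has the same
range as `s`. Hence each `h ∈ S` permutes its range, and some positive iterate of `h` fixes that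
range pointwise (`exists_iterate_eq_self_on_range`). For `h ∈ S` that iterate is an idempotent. If
`I` is an ideal, `i ∈ I` and `s ∈ S`, the element `h = s ∘ i ∘ s` of `I` has the same range as `s`,
so `h^[k] ∘ s = s` for some `k > 0`, and `s ∈ I`.
-/

/-- A self-map of a finite set which maps its range onto itself has a positive iterate fixing the
range pointwise. -/
lemma exists_iterate_eq_self_on_range {X : Type*} [Finite X] (h : X → X)
    (hr : Set.range (h ∘ h) = Set.range h) :
    ∃ k, ∀ x ∈ Set.range h, h^[k + 1] x = x := by
  have hsub : ∀ m, ∀ x ∈ Set.range h, ∃ y, h^[m] y = x := by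
    intro m
    induction m with
    | zero => intro x _; exact ⟨x, rfl⟩
    | succ m ih =>
      intro x hx
      rw [← hr] at hx
      obtain ⟨z, rfl⟩ := hx
      obtain ⟨y, hy⟩ := ih (h z) ⟨z, rfl⟩
      exact ⟨y, by rw [Function.iterate_succ_apply', hy]; rfl⟩
  -- Two iterates `h^[m]` and `h^[m + k + 1]` coincide, and every point of the range is of the
  -- form `h^[m] y`.
  have key : ∃ m k, h^[k + 1 + m] = h^[m] := by
    obtain ⟨a, b, hab, he⟩ := Finite.exists_ne_map_eq_of_infinite (fun n : ℕ => h^[n])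
    rcases lt_or_gt_of_ne hab with hlt | hlt
    · exact ⟨a, b - a - 1, by rw [he]; congr 1; omega⟩
    · exact ⟨b, a - b - 1, by rw [← he]; congr 1; omega⟩
  obtain ⟨m, k, hk⟩ := key
  refine ⟨k, fun x hx => ?_⟩
  obtain ⟨y, rfl⟩ := hsub m x hx
  rw [← Function.iterate_add_apply, hk]

lemma iterate_succ_mem {X : Type*} {S : Set (X → X)}
    (hmul : ∀ f ∈ S, ∀ g ∈ S, f ∘ g ∈ S) {f : X → X} (hf : f ∈ S) (n : ℕ) :
    f^[n + 1] ∈ S := by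
  induction n with
  | zero => exact hf
  | succ n ih => rw [Function.iterate_succ]; exact hmul _ ih _ hf

lemma ncard_range_comp_le_left {X : Type*} [Finite X] (f g : X → X) :
    (Set.range (f ∘ g)).ncard ≤ (Set.range f).ncard :=
  Set.ncard_le_ncard (Set.range_comp_subset_range g f) (Set.toFinite _)

lemma ncard_range_comp_le_right {X : Type*} [Finite X] (f g : X → X) :
    (Set.range (f ∘ g)).ncard ≤ (Set.range g).ncard := by
  rw [Set.range_comp]
  exact Set.ncard_image_le (Set.toFinite _)

/-- Let X be a finite set and S a subsemigroup of F(X). Then S is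
completely simple (contains an idempotent and its only two-sided ideal is S
itself) if and only if all elements of S have the same rank. -/
theorem completelySimple_iff_rank_constant {X : Type*} [Finite X]
    (S : Set (X → X)) (hne : S.Nonempty)
    (hmul : ∀ f ∈ S, ∀ g ∈ S, f ∘ g ∈ S) :
    ((∃ p ∈ S, p ∘ p = p) ∧
      ∀ I : Set (X → X), I ⊆ S → I.Nonempty →
        (∀ s ∈ S, ∀ i ∈ I, s ∘ i ∈ I ∧ i ∘ s ∈ I) → I = S) ↔
    (∀ f ∈ S, ∀ g ∈ S, (Set.range f).ncard = (Set.range g).ncard) := by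
  constructor
  · rintro ⟨-, hI⟩
    have hle : ∀ f ∈ S, ∀ g ∈ S, (Set.range g).ncard ≤ (Set.range f).ncard := by
      intro f hf g hg
      have hS := hI {h | h ∈ S ∧ (Set.range h).ncard ≤ (Set.range f).ncard}
        (fun h hh => hh.1) ⟨f, hf, le_rfl⟩
        (fun s hs i hi =>
          ⟨⟨hmul s hs i hi.1, (ncard_range_comp_le_right s i).trans hi.2⟩,
            ⟨hmul i hi.1 s hs, (ncard_range_comp_le_left i s).trans hi.2⟩⟩)
      rw [← hS] at hg
      exact hg.2
    exact fun f hf g hg => le_antisymm (hle g hg f hf) (hle f hf g hg)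
  · intro hrank
    have hrange : ∀ s ∈ S, ∀ u ∈ S, Set.range (s ∘ u) = Set.range s := fun s hs u hu =>
      Set.eq_of_subset_of_ncard_le (Set.range_comp_subset_range u s)
        (hrank s hs _ (hmul s hs u hu)).le (Set.toFinite _)
    constructor
    · obtain ⟨f, hf⟩ := hne
      obtain ⟨k, hk⟩ := exists_iterate_eq_self_on_range f (hrange f hf f hf)
      refine ⟨f^[k + 1], iterate_succ_mem hmul hf k, funext fun x => hk _ ⟨f^[k] x, ?_⟩⟩
      rw [Function.iterate_succ_apply']
    · rintro I hIS ⟨i, hi⟩ hideal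
      refine hIS.antisymm fun s hs => ?_
      have hh : s ∘ (i ∘ s) ∈ I := (hideal s hs _ (hideal s hs i hi).2).1
      have hr := hrange s hs _ (hIS (hideal s hs i hi).2)
      obtain ⟨k, hk⟩ := exists_iterate_eq_self_on_range _ (hrange _ (hIS hh) _ (hIS hh))
      have hiter := iterate_succ_mem
        (fun f hf g hg => (hideal f (hIS hf) g hg).1) hh k
      have heq : (s ∘ (i ∘ s))^[k + 1] ∘ s = s :=
        funext fun x => hk (s x) (hr ▸ ⟨x, rfl⟩)
      rw [← heq]
      exact (hideal s hs _ hiter).2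
end

section
/- Let X be a finite set and S a subsemigroup of F(X) all of whose elements have the same rank. Let f, g ∈ S and let m ≥ 1 be such that the m-fold composition g^m is idempotent. If f lies in the right ideal generated by g (f = g or f = g ∘ g' for some g' ∈ S), then g^m ∘ f = f; if f lies in the left ideal generated by g (f = g or f = g' ∘ g for some g' ∈ S), then f ∘ g^m = f. -/
/-!
Put `e = g^[m]`. The image of `e` is contained in that of `g`, and since `e ∈ S` has the same rank
as `g` and `X` is finite, the two images coincide. An idempotent fixes its image pointwise, so
`e ∘ g = g`; as powers of `g` commute with `g`, also `g ∘ e = g`. Composing with `g'` on the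
appropriate side gives both claims.
-/

/-- Let X be a finite set and S a subsemigroup of F(X) all of whose
elements have the same rank. Let f, g ∈ S and m ≥ 1 with g^[m] idempotent.
If f lies in the right ideal generated by g then g^[m] ∘ f = f; if f lies in
the left ideal generated by g then f ∘ g^[m] = f. -/
theorem idempotent_power_acts_trivially {X : Type*} [Finite X]
    (S : Set (X → X)) (hne : S.Nonempty)
    (hmul : ∀ f ∈ S, ∀ g ∈ S, f ∘ g ∈ S)
    (hrank : ∀ f ∈ S, ∀ g ∈ S, (Set.range f).ncard = (Set.range g).ncard)
    (f g : X → X) (hf : f ∈ S) (hg : g ∈ S)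
    (m : ℕ) (hm : 1 ≤ m) (hidem : g^[m] ∘ g^[m] = g^[m]) :
    ((f = g ∨ ∃ g' ∈ S, f = g ∘ g') → g^[m] ∘ f = f) ∧
    ((f = g ∨ ∃ g' ∈ S, f = g' ∘ g) → f ∘ g^[m] = f) := by
  obtain ⟨k, rfl⟩ : ∃ k, m = k + 1 := ⟨m - 1, by omega⟩
  have hpow : ∀ n, g^[n + 1] ∈ S := by
    intro n
    induction n with
    | zero => simpa using hg
    | succ n ih =>
      rw [Function.iterate_succ']
      exact hmul _ hg _ ih
  have hsub : Set.range g^[k + 1] ⊆ Set.range g := by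
    rw [Function.iterate_succ']
    exact Set.range_comp_subset_range _ _
  have hrange : Set.range g^[k + 1] = Set.range g :=
    Set.eq_of_subset_of_ncard_le hsub (hrank _ hg _ (hpow k)).le (Set.toFinite _)
  have hleft : g^[k + 1] ∘ g = g := by
    funext x
    obtain ⟨y, hy⟩ : g x ∈ Set.range g^[k + 1] := hrange ▸ Set.mem_range_self x
    rw [Function.comp_apply, ← hy]
    exact congrFun hidem y
  have hright : g ∘ g^[k + 1] = g := by
    rw [← Function.iterate_succ', Function.iterate_succ, hleft]
  constructor
  · rintro (rfl | ⟨g', -, rfl⟩)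
    · exact hleft
    · rw [← Function.comp_assoc, hleft]
  · rintro (rfl | ⟨g', -, rfl⟩)
    · exact hright
    · rw [Function.comp_assoc, hright]
end

section
/- Let X be a finite set and S a subsemigroup of F(X) all of whose elements have the same rank (so S is completely simple). For f, g ∈ S the following are equivalent: (L1) f and g are L-related; (L2) f and g generate the same left ideal, i.e., f lies in {g} ∪ S∘g and g lies in {f} ∪ S∘f; (L3) f and g define the same partition, i.e., for all x, x' ∈ X, f(x) = f(x') ⇔ g(x) = g(x'). -/
/-!
Only the passage from equal kernels to equal left ideals uses the rank hypothesis. Since `g ∘ g`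
has the same rank as `g`, the map `g` permutes its finite image, so `g^[n + 1] ∘ g = g` for some
`n` (`exists_iterate_comp_eq_self`). Thus `g^[n + 1] x` and `x` always have the same image under
`g`, hence under any `f` with the same kernel as `g`. This gives `f = (f ∘ g^[n]) ∘ g`, where
`f ∘ g^[n] ∈ S`.
-/

/-- A self-map of a finite set that does not lose rank when squared permutes its image, so some
positive power of it is the identity there. -/
theorem exists_iterate_comp_eq_self {X : Type*} [Finite X] (g : X → X)
    (h : (Set.range (g ∘ g)).ncard = (Set.range g).ncard) :
    ∃ n : ℕ, ∀ x, g (g^[n + 1] x) = g x := by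
  have hinj : Set.InjOn g (Set.range g) := by
    apply Set.injOn_of_ncard_image_eq _ (Set.toFinite _)
    rw [← Set.range_comp, h]
  have cancel : ∀ (a k : ℕ) (x : X), g^[a] (g^[k] (g x)) = g^[a] (g x) → g^[k] (g x) = g x := by
    intro a
    induction a with
    | zero => intro k x hx; exact hx
    | succ a ih =>
      intro k x hx
      apply ih
      have comm : ∀ (m : ℕ) (y : X), g^[m] (g y) ∈ Set.range g := fun m y =>
        ⟨g^[m] y, by rw [← Function.iterate_succ_apply' g, Function.iterate_succ_apply]⟩
      rw [Function.iterate_succ_apply', Function.iterate_succ_apply'] at hx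
      refine hinj ?_ (comm a x) hx
      rw [← Function.iterate_add_apply]
      exact comm _ x
  -- The iterates of `g` cannot be pairwise distinct, as `X → X` is finite.
  obtain ⟨a, b, hab, heq⟩ : ∃ a b : ℕ, a < b ∧ g^[a] = g^[b] := by
    obtain ⟨a, b, hne, heq⟩ := Finite.exists_ne_map_eq_of_infinite (fun n : ℕ => g^[n])
    rcases lt_or_gt_of_ne hne with h | h
    · exact ⟨a, b, h, heq⟩
    · exact ⟨b, a, h, heq.symm⟩
  obtain ⟨n, rfl⟩ := Nat.exists_eq_add_of_lt hab
  refine ⟨n, fun x => ?_⟩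
  rw [← Function.iterate_succ_apply' g, Function.iterate_succ_apply]
  apply cancel a
  rw [← Function.iterate_add_apply, ← add_assoc, ← heq]

/-- If `f` is constant on the fibres of `g`, then `f` lies in the left ideal `S ∘ g`. -/
theorem exists_eq_comp_of_ker_le {X : Type*} [Finite X] (S : Set (X → X))
    (hmul : ∀ f ∈ S, ∀ g ∈ S, f ∘ g ∈ S)
    (hrank : ∀ f ∈ S, ∀ g ∈ S, (Set.range f).ncard = (Set.range g).ncard)
    (f g : X → X) (hf : f ∈ S) (hg : g ∈ S) (h : ∀ x x' : X, g x = g x' → f x = f x') :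
    ∃ s ∈ S, f = s ∘ g := by
  obtain ⟨n, hn⟩ := exists_iterate_comp_eq_self g (hrank _ (hmul g hg g hg) _ hg)
  have mem : ∀ k : ℕ, f ∘ g^[k] ∈ S := by
    intro k
    induction k with
    | zero => exact hf
    | succ k ih =>
      rw [Function.iterate_succ, ← Function.comp_assoc]
      exact hmul _ ih _ hg
  exact ⟨f ∘ g^[n], mem n, funext fun x => (h _ _ (hn x)).symm⟩

/-- Let X be a finite set and S a subsemigroup of F(X) all of whose
elements have the same rank (so S is completely simple). For f, g ∈ S the
following are equivalent: (L1) f and g are L-related; (L2) f and g generate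
the same left ideal; (L3) f and g define the same partition. -/
theorem lRelated_tfae {X : Type*} [Finite X]
    (S : Set (X → X)) (hne : S.Nonempty)
    (hmul : ∀ f ∈ S, ∀ g ∈ S, f ∘ g ∈ S)
    (hrank : ∀ f ∈ S, ∀ g ∈ S, (Set.range f).ncard = (Set.range g).ncard)
    (f g : X → X) (hf : f ∈ S) (hg : g ∈ S) :
    ((f = g ∨ ∃ f' ∈ S, ∃ g' ∈ S, f = g' ∘ g ∧ g = f' ∘ f) ↔
      ((f = g ∨ ∃ s ∈ S, f = s ∘ g) ∧ (g = f ∨ ∃ s ∈ S, g = s ∘ f))) ∧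
    (((f = g ∨ ∃ s ∈ S, f = s ∘ g) ∧ (g = f ∨ ∃ s ∈ S, g = s ∘ f)) ↔
      ∀ x x' : X, f x = f x' ↔ g x = g x') := by
  refine ⟨⟨?_, ?_⟩, ⟨?_, ?_⟩⟩
  · rintro (h | ⟨f', hf', g', hg', h1, h2⟩)
    · exact ⟨Or.inl h, Or.inl h.symm⟩
    · exact ⟨Or.inr ⟨g', hg', h1⟩, Or.inr ⟨f', hf', h2⟩⟩
  · rintro ⟨h | ⟨s, hs, h1⟩, h' | ⟨t, ht, h2⟩⟩
    · exact Or.inl h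
    · exact Or.inl h
    · exact Or.inl h'.symm
    · exact Or.inr ⟨t, ht, s, hs, h1, h2⟩
  · have key : ∀ u v : X → X, (u = v ∨ ∃ s ∈ S, u = s ∘ v) →
        ∀ x x', v x = v x' → u x = u x' := by
      rintro u v (rfl | ⟨s, -, rfl⟩) x x' hx
      · exact hx
      · exact congrArg s hx
    rintro ⟨h1, h2⟩ x x'
    exact ⟨key g f h2 x x', key f g h1 x x'⟩
  · intro h
    exact ⟨Or.inr (exists_eq_comp_of_ker_le S hmul hrank f g hf hg fun x x' => (h x x').2),
      Or.inr (exists_eq_comp_of_ker_le S hmul hrank g f hg hf fun x x' => (h x x').1)⟩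
end

section
/- Let X be a set and p : X → X an idempotent (p ∘ p = p). Let P be a partition of X preserved by p (for every A ∈ P, p⁻¹(A) ∈ P). If P is finite and the cardinality of P equals the cardinality of the partition P_p defined by p, then P = P_p. -/
/-!
Every block `A` of `P` satisfies `p ⁻¹' A = A`: the block `p ⁻¹' A` is nonempty, and for `x` in it
`p x` is a fixed point lying both in `A` and in `p ⁻¹' A`. Hence every block contains a whole fibre
of `p`. Choosing one fibre in each block gives an injection from `P` into the set of fibres, which is
surjective because both sets have the same finite cardinality. So each block contains exactly one
fibre, and being a union of fibres it equals that fibre.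
-/

/-- Let X be a set and p : X → X an idempotent. Let P be a
partition of X preserved by p. If P is finite and the cardinality of P equals
that of the partition P_p defined by p, then P = P_p. -/
theorem partition_eq_of_card_eq {X : Type*} (p : X → X) (hidem : p ∘ p = p)
    (P : Set (Set X))
    (hne : ∀ A ∈ P, A.Nonempty)
    (hdisj : ∀ A ∈ P, ∀ B ∈ P, A ≠ B → A ∩ B = ∅)
    (hcover : ⋃₀ P = Set.univ)
    (hpres : ∀ A ∈ P, p ⁻¹' A ∈ P)
    (hfin : P.Finite)
    (hcard : P.ncard = ((fun y => p ⁻¹' {y}) '' Set.range p).ncard) :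
    P = (fun y => p ⁻¹' {y}) '' Set.range p := by
  set Q := (fun y => p ⁻¹' {y}) '' Set.range p with hQ
  have hpp : ∀ x, p (p x) = p x := fun x => congrFun hidem x
  have huniq : ∀ A ∈ P, ∀ B ∈ P, ∀ x, x ∈ A → x ∈ B → A = B := by
    intro A hA B hB x hxA hxB
    by_contra hAB
    have hx : x ∈ A ∩ B := ⟨hxA, hxB⟩
    rw [hdisj A hA B hB hAB] at hx
    exact hx
  have hinv : ∀ A ∈ P, p ⁻¹' A = A := by
    intro A hA
    obtain ⟨x, hx⟩ := hne _ (hpres A hA)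
    refine huniq _ (hpres A hA) A hA (p x) ?_ hx
    change p (p x) ∈ A
    rw [hpp]
    exact hx
  -- `Set.ncard` of an infinite set is `0`; here that would force `P`, hence `X`, to be empty.
  have hQfin : Q.Finite := by
    by_contra hinf
    rw [Set.Infinite.ncard hinf, Set.ncard_eq_zero hfin] at hcard
    rw [hcard, Set.sUnion_empty] at hcover
    have hX : IsEmpty X := Set.univ_eq_empty_iff.mp hcover.symm
    exact hinf (Set.toFinite Q)
  have hex : ∀ A : Set X, ∃ F : Set X, A ∈ P → F ∈ Q ∧ F ⊆ A := by
    intro A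
    by_cases hA : A ∈ P
    · obtain ⟨x, hx⟩ := hne A hA
      rw [← hinv A hA] at hx
      refine ⟨p ⁻¹' {p x}, fun _ => ⟨⟨p x, ⟨x, rfl⟩, rfl⟩, ?_⟩⟩
      intro z hz
      rw [← hinv A hA]
      change p z ∈ A
      rw [show p z = p x from hz]
      exact hx
    · exact ⟨∅, fun h => absurd h hA⟩
  choose g hg using hex
  have hQne : ∀ F ∈ Q, F.Nonempty := by
    rintro F ⟨y, ⟨x, rfl⟩, rfl⟩
    exact ⟨x, rfl⟩
  have hinj : Set.InjOn g P := by
    intro A hA B hB hAB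
    obtain ⟨x, hx⟩ := hQne _ (hg A hA).1
    exact huniq A hA B hB x ((hg A hA).2 hx) ((hg B hB).2 (hAB ▸ hx))
  have himg : g '' P = Q := by
    refine Set.eq_of_subset_of_ncard_le ?_ ?_ hQfin
    · rintro F ⟨A, hA, rfl⟩
      exact (hg A hA).1
    · rw [hinj.ncard_image, hcard]
  have hgA : ∀ A ∈ P, g A = A := by
    intro A hA
    refine Set.Subset.antisymm (hg A hA).2 fun x hx => ?_
    -- The fibre through `x` is the chosen fibre of some block `B`, which contains `x`, so `B = A`.
    have hF : p ⁻¹' {p x} ∈ Q := ⟨p x, ⟨x, rfl⟩, rfl⟩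
    rw [← himg] at hF
    obtain ⟨B, hB, hBF⟩ := hF
    have hxB : x ∈ g B := by
      rw [hBF]
      rfl
    rwa [huniq A hA B hB x hx ((hg B hB).2 hxB)]
  rw [← himg]
  exact ((Set.image_congr hgA).trans (Set.image_id' P)).symm
end

section
/- Let X be a finite set and S a subsemigroup of F(X). The following are equivalent: (1) there exists an idempotent q ∈ S of minimal rank among elements of S such that every s ∈ S preserves the partition P_q defined by q; (2) S has exactly one minimal left ideal. -/
/-!
Both directions rest on the existence of an idempotent in every nonempty finite semigroup
(`exists_idempotent_mem`) and on counting ranks.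

If every `s ∈ S` preserves the partition of `q`, then `q ∘ s = q ∘ s ∘ q` for all `s ∈ S`. Hence,
for a left ideal `L` and `l ∈ L`, the map `q ∘ l` lies in the subsemigroup
`{g ∈ L | q ∘ g = g ∧ g ∘ q = g}`. An idempotent `e` of this subsemigroup has range `range q` by
minimality of the rank, so it fixes `range q` pointwise and `e = e ∘ q = q`. Thus `q` lies in every
left ideal, and `S ∘ q` is the least left ideal.

Conversely, every left ideal contains a minimal one by finiteness, so the unique minimal left
ideal `L` is contained in every left ideal. It contains an idempotent `q` of minimal rank. For
`s ∈ S`, the left ideal `S ∘ q ∘ s` contains `q`, so `q = t ∘ q ∘ s` for some `t ∈ S`. By minimality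
of the rank `t` is injective on `range q`, so `q ∘ s` and `q` have the same fibres.
-/

/-- A set S of self-maps of A has exactly one minimal left ideal: there is a
unique left ideal of S which contains no left ideal as a proper subset. -/
def HasUniqueMinimalLeftIdeal {A : Type*} (S : Set (A → A)) : Prop :=
  ∃! L : Set (A → A), L ⊆ S ∧ L.Nonempty ∧ (∀ s ∈ S, ∀ l ∈ L, s ∘ l ∈ L) ∧
    ∀ L' : Set (A → A), L' ⊆ L → L'.Nonempty →
      (∀ s ∈ S, ∀ l ∈ L', s ∘ l ∈ L') → L' = L

/-- A nonempty set of self-maps of a finite type closed under composition contains an idempotent. -/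
lemma exists_idempotent_mem {X : Type*} [Finite X] (T : Set (X → X)) (hne : T.Nonempty)
    (hT : ∀ f ∈ T, ∀ g ∈ T, f ∘ g ∈ T) : ∃ e ∈ T, e ∘ e = e := by
  let M := Function.End X
  have : Finite M := inferInstanceAs (Finite (X → X))
  -- In the discrete topology this is the Ellis–Numakura lemma.
  let : TopologicalSpace M := ⊥
  have : DiscreteTopology M := ⟨rfl⟩
  exact exists_idempotent_in_compact_subsemigroup (M := M)
    (fun _ => continuous_of_discreteTopology) T hne (Set.toFinite _).isCompact hT

/-- Let X be a finite set and S a subsemigroup of F(X). The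
following are equivalent: (1) there exists an idempotent q ∈ S of minimal rank
such that every s ∈ S preserves the partition P_q defined by q; (2) S has
exactly one minimal left ideal. -/
theorem idempotent_partition_preserved_iff_unique_minimal_left_ideal
    {X : Type*} [Finite X] (S : Set (X → X)) (hne : S.Nonempty)
    (hmul : ∀ f ∈ S, ∀ g ∈ S, f ∘ g ∈ S) :
    (∃ q ∈ S, q ∘ q = q ∧
      (∀ f ∈ S, (Set.range q).ncard ≤ (Set.range f).ncard) ∧
      ∀ s ∈ S, ∀ A ∈ (fun y => q ⁻¹' {y}) '' Set.range q,
        s ⁻¹' A ∈ (fun y => q ⁻¹' {y}) '' Set.range q) ↔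
    HasUniqueMinimalLeftIdeal S := by
  constructor
  · rintro ⟨q, hq, hqq, hmin, hpres⟩
    have hqq' : ∀ x, q (q x) = q x := fun x => congrFun hqq x
    have key : ∀ s ∈ S, (q ∘ s) ∘ q = q ∘ s := by
      intro s hs
      funext x
      obtain ⟨y, -, hy⟩ := hpres s hs (q ⁻¹' {q (s x)}) ⟨q (s x), ⟨s x, rfl⟩, rfl⟩
      have hiff : ∀ z, q z = y ↔ q (s z) = q (s x) := fun z => Set.ext_iff.1 hy z
      have hx : q x = y := (hiff x).2 rfl
      exact (hiff (q x)).1 (by rw [hqq', hx])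
    have hall : ∀ L : Set (X → X), L ⊆ S → L.Nonempty → (∀ s ∈ S, ∀ l ∈ L, s ∘ l ∈ L) →
        q ∈ L := by
      rintro L hLS ⟨l, hl⟩ hL
      obtain ⟨e, ⟨heL, hqe, heq⟩, hee⟩ :=
        exists_idempotent_mem {g | g ∈ L ∧ q ∘ g = g ∧ g ∘ q = g}
          ⟨q ∘ l, hL q hq l hl, by rw [← Function.comp_assoc, hqq], key l (hLS hl)⟩
          (by
            rintro f ⟨hf, hqf, hfq⟩ g ⟨hg, hqg, hgq⟩
            exact ⟨hL f (hLS hf) g hg, by rw [← Function.comp_assoc, hqf],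
              by rw [Function.comp_assoc, hgq]⟩)
      have hsub : Set.range e ⊆ Set.range q := by
        rw [← hqe]
        exact Set.range_comp_subset_range e q
      have hran : Set.range e = Set.range q :=
        Set.eq_of_subset_of_ncard_le hsub (hmin e (hLS heL)) (Set.toFinite _)
      have : e = q := by
        rw [← heq]
        funext x
        obtain ⟨z, hz⟩ : q x ∈ Set.range e := hran ▸ ⟨x, rfl⟩
        change e (q x) = q x
        rw [← hz]
        exact congrFun hee z
      exact this ▸ heL
    let L₀ : Set (X → X) := {g | ∃ s ∈ S, s ∘ q = g}
    have hL₀S : L₀ ⊆ S := by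
      rintro _ ⟨s, hs, rfl⟩
      exact hmul s hs q hq
    have hL₀ne : L₀.Nonempty := ⟨_, q, hq, rfl⟩
    have hL₀ : ∀ s ∈ S, ∀ l ∈ L₀, s ∘ l ∈ L₀ := by
      rintro s hs _ ⟨t, ht, rfl⟩
      exact ⟨s ∘ t, hmul s hs t ht, rfl⟩
    have hle : ∀ L : Set (X → X), L ⊆ S → L.Nonempty → (∀ s ∈ S, ∀ l ∈ L, s ∘ l ∈ L) →
        L₀ ⊆ L := by
      rintro L hLS hLne hL _ ⟨s, hs, rfl⟩
      exact hL s hs q (hall L hLS hLne hL)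
    refine ⟨L₀, ⟨hL₀S, hL₀ne, hL₀, ?_⟩, ?_⟩
    · intro L hLL₀ hLne hL
      exact hLL₀.antisymm (hle L (hLL₀.trans hL₀S) hLne hL)
    · rintro L ⟨hLS, hLne, hL, hLmin⟩
      exact (hLmin L₀ (hle L hLS hLne hL) hL₀ne hL₀).symm
  · rintro ⟨L, ⟨hLS, ⟨l, hl⟩, hL, -⟩, huniq⟩
    have hleast : ∀ K : Set (X → X), K ⊆ S → K.Nonempty → (∀ s ∈ S, ∀ l ∈ K, s ∘ l ∈ K) →
        L ⊆ K := by
      intro K hKS hKne hK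
      obtain ⟨K', hK'K, hK'⟩ := exists_minimal_le_of_wellFoundedLT
        (fun K : Set (X → X) => K ⊆ S ∧ K.Nonempty ∧ ∀ s ∈ S, ∀ l ∈ K, s ∘ l ∈ K) K
        ⟨hKS, hKne, hK⟩
      have : K' = L := huniq K' ⟨hK'.prop.1, hK'.prop.2.1, hK'.prop.2.2,
        fun L' h1 h2 h3 => hK'.eq_of_subset ⟨h1.trans hK'.prop.1, h2, h3⟩ h1⟩
      exact this ▸ hK'K
    obtain ⟨f₀, hf₀, hf₀min⟩ := Set.exists_min_image S (fun f => (Set.range f).ncard)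
      (Set.toFinite S) hne
    have hcomp : ∀ f g : X → X, (Set.range (f ∘ g)).ncard ≤ (Set.range f).ncard :=
      fun f g => Set.ncard_le_ncard (Set.range_comp_subset_range g f) (Set.toFinite _)
    obtain ⟨q, ⟨hqL, hqmin⟩, hqq⟩ := exists_idempotent_mem
      {g | g ∈ L ∧ ∀ f ∈ S, (Set.range g).ncard ≤ (Set.range f).ncard}
      ⟨f₀ ∘ l, hL f₀ hf₀ l hl, fun f hf => (hcomp f₀ l).trans (hf₀min f hf)⟩
      (fun f hf g hg => ⟨hL f (hLS hf.1) g hg.1, fun h hh => (hcomp f g).trans (hf.2 h hh)⟩)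
    have hq : q ∈ S := hLS hqL
    refine ⟨q, hq, hqq, hqmin, ?_⟩
    rintro s hs _ ⟨y, hy, rfl⟩
    obtain ⟨t, ht, htq⟩ : q ∈ {g | ∃ t ∈ S, t ∘ (q ∘ s) = g} := by
      refine hleast {g | ∃ t ∈ S, t ∘ (q ∘ s) = g} ?_ ⟨_, q, hq, rfl⟩ ?_ hqL
      · rintro _ ⟨t, ht, rfl⟩
        exact hmul t ht _ (hmul q hq s hs)
      · rintro u hu _ ⟨t, ht, rfl⟩
        exact ⟨u ∘ t, hmul u hu t ht, rfl⟩
    have htq' : ∀ x, t (q (s x)) = q x := fun x => congrFun htq x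
    have hran : Set.range (q ∘ s) = Set.range q :=
      Set.eq_of_subset_of_ncard_le (Set.range_comp_subset_range s q)
        (hqmin _ (hmul q hq s hs)) (Set.toFinite _)
    have hinj : Set.InjOn t (Set.range q) := by
      apply Set.injOn_of_ncard_image_eq _ (Set.toFinite _)
      refine le_antisymm (Set.ncard_image_le (Set.toFinite _)) ?_
      rw [← Set.range_comp]
      exact hqmin _ (hmul t ht q hq)
    rw [← hran] at hy
    obtain ⟨x, rfl⟩ := hy
    refine ⟨q x, ⟨x, rfl⟩, ?_⟩
    ext z
    change q z = q x ↔ q (s z) = q (s x)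
    constructor
    · intro h
      exact hinj ⟨_, rfl⟩ ⟨_, rfl⟩ (by rw [htq', htq', h])
    · intro h
      rw [← htq' z, h, htq']
end

section
/- Let A be a finite nonempty set, ℓ ≥ 1, and θ_0, …, θ_{ℓ−1} : A → A the column maps of a length-ℓ substitution θ; let S_θ be the subsemigroup of functions A → A (under composition) generated by {θ_0, …, θ_{ℓ−1}}, and let c be the minimal rank of elements of S_θ (the naïve column number of θ). The following are equivalent: (1) S_θ has exactly one minimal left ideal; (2) there exist a finite set B of cardinality c, a surjection β : A → B, and bijections η_0, …, η_{ℓ−1} : B → B such that η_m ∘ β = β ∘ θ_m for all 0 ≤ m ≤ ℓ−1 (i.e., θ inner encodes a bijective substitution on a c-letter alphabet). -/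
/-!
Write `S` for the semigroup of `θ`, and let `c` be the minimal rank in `S`.

If `L` is the unique minimal left ideal, pick `g ∈ L` of rank `c`. By finiteness `L` lies in every
left ideal (`minimal_subset_leftIdeal`), in particular in the one generated by `g ∘ θ m`, so
`g = s ∘ g ∘ θ m` for some `s`. Comparing ranks, `s` is injective on the range of `g ∘ θ m`; hence
`g` and `g ∘ θ m` have the same kernel, and `θ m` descends to a bijection of `A / ker g`, a set of
`c` elements.

Conversely, given `β` and bijections `η m`, each `f ∈ S` satisfies `β ∘ f = σ ∘ β` for a
permutation `σ` of `B` (`exists_perm_of_mem`). If `f` has rank `c`, then `β ∘ f` is onto `B`, so `β`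
is injective on the range of `f` and `ker f = ker β` (`ker_eq_of_rank`). For `n` the order of `σ`,
`β ∘ f^n = β`, so every other `g` of rank `c` equals `g ∘ f^n`, which lies in the left ideal
generated by `f`. Hence the elements of rank `c` form a minimal left ideal, and it is the only one
because every left ideal contains an element of rank `c`.
-/

/-- The semigroup S_θ of a length-ℓ substitution with column maps
θ 0, …, θ (ℓ-1): the set of all (nonempty) compositions of column maps. -/
def substSemigroup {A : Type*} {ℓ : ℕ} (θ : Fin ℓ → A → A) : Set (A → A) :=
  {f | ∃ l : List (Fin ℓ), l ≠ [] ∧ (l.map θ).foldr (· ∘ ·) id = f}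

lemma comp_mem_substSemigroup {A : Type*} {ℓ : ℕ} {θ : Fin ℓ → A → A} {f g : A → A}
    (hf : f ∈ substSemigroup θ) (hg : g ∈ substSemigroup θ) : f ∘ g ∈ substSemigroup θ := by
  obtain ⟨l, hl, rfl⟩ := hf
  obtain ⟨l', hl', rfl⟩ := hg
  refine ⟨l ++ l', by simp [hl], ?_⟩
  clear hl
  induction l with
  | nil => rfl
  | cons a l ih =>
    simp only [List.cons_append, List.map_cons, List.foldr_cons, ih]
    rfl

lemma column_mem_substSemigroup {A : Type*} {ℓ : ℕ} (θ : Fin ℓ → A → A) (m : Fin ℓ) :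
    θ m ∈ substSemigroup θ :=
  ⟨[m], by simp, rfl⟩

lemma exists_perm_of_mem {A B : Type*} {ℓ : ℕ} {θ : Fin ℓ → A → A} {β : A → B}
    {η : Fin ℓ → B → B} (hη : ∀ m, Function.Bijective (η m))
    (hβη : ∀ m, η m ∘ β = β ∘ θ m) {f : A → A} (hf : f ∈ substSemigroup θ) :
    ∃ σ : Equiv.Perm B, ∀ a, β (f a) = σ (β a) := by
  obtain ⟨l, -, rfl⟩ := hf
  induction l with
  | nil => exact ⟨1, fun _ => rfl⟩
  | cons m l ih =>
    obtain ⟨σ, hσ⟩ := ih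
    refine ⟨Equiv.ofBijective _ (hη m) * σ, fun a => ?_⟩
    simp only [List.map_cons, List.foldr_cons, Function.comp_apply, Equiv.Perm.mul_apply,
      Equiv.ofBijective_apply, ← hσ]
    exact (congrFun (hβη m) _).symm

/-- If `f` descends along the surjection `β` to a permutation and has rank `|B|`, then `f` and `β`
have the same kernel. -/
lemma ker_eq_of_rank {A B : Type*} [Finite A] [Fintype B] {β : A → B}
    (hβ : Function.Surjective β) {f : A → A} {σ : Equiv.Perm B}
    (hσ : ∀ a, β (f a) = σ (β a)) (hf : (Set.range f).ncard = Fintype.card B) (a b : A) :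
    f a = f b ↔ β a = β b := by
  have himg : β '' Set.range f = Set.univ := by
    rw [← Set.range_comp, Set.range_eq_univ]
    have : β ∘ f = σ ∘ β := funext hσ
    rw [this]
    exact σ.surjective.comp hβ
  have hinj : Set.InjOn β (Set.range f) := by
    refine Set.injOn_of_ncard_image_eq ?_ (Set.toFinite _)
    rw [himg, hf, Set.ncard_univ, Nat.card_eq_fintype_card]
  constructor
  · intro h
    apply σ.injective
    rw [← hσ, ← hσ, h]
  · intro h
    apply hinj ⟨a, rfl⟩ ⟨b, rfl⟩
    rw [hσ, hσ, h]

/-- On a finite alphabet every left ideal contains a minimal one; so if `L` is the only minimal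
left ideal, it is contained in every left ideal. -/
lemma minimal_subset_leftIdeal {A : Type*} [Finite A] {S L I : Set (A → A)}
    (huniq : ∀ M : Set (A → A), (M ⊆ S ∧ M.Nonempty ∧ (∀ s ∈ S, ∀ l ∈ M, s ∘ l ∈ M) ∧
      ∀ L' : Set (A → A), L' ⊆ M → L'.Nonempty →
        (∀ s ∈ S, ∀ l ∈ L', s ∘ l ∈ L') → L' = M) → M = L)
    (hIS : I ⊆ S) (hI : I.Nonempty) (hideal : ∀ s ∈ S, ∀ l ∈ I, s ∘ l ∈ I) : L ⊆ I := by
  obtain ⟨M, hMI, hM⟩ := exists_minimal_le_of_wellFoundedLT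
    (fun J : Set (A → A) => J.Nonempty ∧ ∀ s ∈ S, ∀ l ∈ J, s ∘ l ∈ J) I ⟨hI, hideal⟩
  rw [← huniq M ⟨hMI.trans hIS, hM.prop.1, hM.prop.2, fun L' hL' hne hid =>
    hM.eq_of_le ⟨hne, hid⟩ hL'⟩]
  exact hMI

/-- For a length-ℓ substitution θ on a finite nonempty alphabet A
with naive column number c (the minimal rank of an element of S_θ), the
following are equivalent: (1) S_θ has exactly one minimal left ideal;
(2) θ inner encodes a bijective substitution on a c-letter alphabet. -/
theorem unique_minimal_left_ideal_iff_bijective_inner_encoding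
    {A : Type*} [Finite A] [Nonempty A] {ℓ : ℕ} (hℓ : 1 ≤ ℓ)
    (θ : Fin ℓ → A → A) (c : ℕ)
    (hc : c = sInf {n | ∃ f ∈ substSemigroup θ, (Set.range f).ncard = n}) :
    HasUniqueMinimalLeftIdeal (substSemigroup θ) ↔
    ∃ (B : Type) (_ : Fintype B) (β : A → B) (η : Fin ℓ → B → B),
      Fintype.card B = c ∧ Function.Surjective β ∧
      (∀ m, Function.Bijective (η m)) ∧ (∀ m, η m ∘ β = β ∘ θ m) := by
  classical
  set S := substSemigroup θ with hS
  have hle : ∀ f ∈ S, c ≤ (Set.range f).ncard := fun f hf => hc ▸ Nat.sInf_le ⟨f, hf, rfl⟩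
  obtain ⟨f₀, hf₀, hf₀c⟩ : ∃ f ∈ S, (Set.range f).ncard = c := by
    have := Nat.sInf_mem (s := {n | ∃ f ∈ S, (Set.range f).ncard = n})
      ⟨_, θ ⟨0, hℓ⟩, column_mem_substSemigroup θ _, rfl⟩
    rwa [← hc] at this
  -- post-composition does not increase the rank, so it preserves the minimal rank `c`
  have hrank : ∀ s ∈ S, ∀ f ∈ S, (Set.range f).ncard = c → (Set.range (s ∘ f)).ncard = c := by
    intro s hs f hf hfc
    refine le_antisymm ?_ (hle _ (comp_mem_substSemigroup hs hf))
    rw [Set.range_comp, ← hfc]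
    exact Set.ncard_image_le
  have hrank' : ∀ s ∈ S, ∀ f ∈ S, (Set.range f).ncard = c → (Set.range (f ∘ s)).ncard = c := by
    intro s hs f hf hfc
    refine le_antisymm ?_ (hle _ (comp_mem_substSemigroup hf hs))
    rw [← hfc]
    exact Set.ncard_le_ncard (Set.range_comp_subset_range s f)
  constructor
  · rintro ⟨L, ⟨hLS, ⟨l, hl⟩, hLideal, -⟩, huniq⟩
    obtain ⟨g, hgL, hgc⟩ : ∃ g ∈ L, (Set.range g).ncard = c :=
      ⟨f₀ ∘ l, hLideal _ hf₀ _ hl, hrank' _ (hLS hl) _ hf₀ hf₀c⟩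
    have hker : ∀ m a b, g (θ m a) = g (θ m b) ↔ g a = g b := by
      intro m
      have hgm : g ∘ θ m ∈ S :=
        comp_mem_substSemigroup (hLS hgL) (column_mem_substSemigroup θ m)
      -- `g` lies in the left ideal generated by `g ∘ θ m`; `s = id` covers the generator itself
      obtain ⟨s, hs⟩ : ∃ s : A → A, s ∘ (g ∘ θ m) = g := by
        have hsub := minimal_subset_leftIdeal (I := {h | h ∈ S ∧ ∃ s, s ∘ (g ∘ θ m) = h}) huniq
          (fun h hh => hh.1) ⟨g ∘ θ m, hgm, id, rfl⟩ (by
            rintro t ht h ⟨hhS, s, rfl⟩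
            exact ⟨comp_mem_substSemigroup ht hhS, t ∘ s, rfl⟩)
        exact (hsub hgL).2
      have hinj : Set.InjOn s (Set.range (g ∘ θ m)) := by
        refine Set.injOn_of_ncard_image_eq ?_ (Set.toFinite _)
        rw [← Set.range_comp, hs, hgc, hrank' _ (column_mem_substSemigroup θ m) _ (hLS hgL) hgc]
      intro a b
      have ha : s (g (θ m a)) = g a := congrFun hs a
      have hb : s (g (θ m b)) = g b := congrFun hs b
      constructor
      · intro h
        rw [← ha, ← hb, h]
      · intro h
        exact hinj ⟨a, rfl⟩ ⟨b, rfl⟩ (ha.trans (h.trans hb.symm))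
    have e : Set.range g ≃ Fin c := Finite.equivFinOfCardEq hgc
    set β : A → Fin c := fun a => e ⟨g a, a, rfl⟩ with hβdef
    have hβ : Function.Surjective β := by
      intro y
      obtain ⟨⟨_, a, rfl⟩, rfl⟩ := e.surjective y
      exact ⟨a, rfl⟩
    have hβg : ∀ a b, β a = β b ↔ g a = g b := by
      intro a b
      exact e.injective.eq_iff.trans Subtype.mk_eq_mk
    refine ⟨Fin c, inferInstance, β, fun m y => β (θ m (Function.surjInv hβ y)),
      Fintype.card_fin c, hβ, fun m => ?_, fun m => ?_⟩
    · apply Function.Injective.bijective_of_finite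
      intro x y hxy
      have h := (hker m _ _).1 ((hβg _ _).1 hxy)
      rw [← hβg, Function.surjInv_eq hβ, Function.surjInv_eq hβ] at h
      exact h
    · funext a
      refine (hβg _ _).2 ((hker m _ _).2 ((hβg _ _).1 ?_))
      exact Function.surjInv_eq hβ _
  · rintro ⟨B, _, β, η, hB, hβ, hη, hβη⟩
    have hLideal : ∀ s ∈ S, ∀ l ∈ {f | f ∈ S ∧ (Set.range f).ncard = c},
        s ∘ l ∈ {f | f ∈ S ∧ (Set.range f).ncard = c} := fun s hs l hl =>
      ⟨comp_mem_substSemigroup hs hl.1, hrank s hs l hl.1 hl.2⟩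
    have hmin : ∀ L' : Set (A → A), L' ⊆ {f | f ∈ S ∧ (Set.range f).ncard = c} → L'.Nonempty →
        (∀ s ∈ S, ∀ l ∈ L', s ∘ l ∈ L') → L' = {f | f ∈ S ∧ (Set.range f).ncard = c} := by
      rintro L' hL' ⟨f, hf⟩ hid
      refine hL'.antisymm ?_
      rintro g ⟨hgS, hgc⟩
      obtain ⟨σ, hσ⟩ := exists_perm_of_mem hη hβη (hL' hf).1
      obtain ⟨τ, hτ⟩ := exists_perm_of_mem hη hβη hgS
      have hiter : ∀ n a, β (f^[n] a) = (σ ^ n) (β a) := by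
        intro n a
        induction n with
        | zero => rfl
        | succ n ih => rw [Function.iterate_succ_apply', hσ, ih, pow_succ', Equiv.Perm.mul_apply]
      have hmem : ∀ n, f^[n + 1] ∈ L' := by
        intro n
        induction n with
        | zero => exact hf
        | succ n ih =>
          rw [Function.iterate_succ']
          exact hid _ (hL' hf).1 _ ih
      obtain ⟨n, hn⟩ := Nat.exists_eq_succ_of_ne_zero (orderOf_pos σ).ne'
      have hg : g ∘ f^[n + 1] = g := by
        funext a
        refine (ker_eq_of_rank hβ hτ (hgc.trans hB.symm) _ _).2 ?_
        rw [hiter, ← Nat.succ_eq_add_one, ← hn, pow_orderOf_eq_one, Equiv.Perm.one_apply]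
      rw [← hg]
      exact hid _ hgS _ (hmem n)
    refine ⟨{f | f ∈ S ∧ (Set.range f).ncard = c},
      ⟨fun f hf => hf.1, ⟨f₀, hf₀, hf₀c⟩, hLideal, hmin⟩, ?_⟩
    rintro M ⟨hMS, ⟨l, hl⟩, hMideal, hMmin⟩
    have hinter : M ∩ {f | f ∈ S ∧ (Set.range f).ncard = c} = M := by
      refine hMmin _ Set.inter_subset_left ?_ ?_
      · exact ⟨f₀ ∘ l, hMideal _ hf₀ _ hl, comp_mem_substSemigroup hf₀ (hMS hl),
          hrank' _ (hMS hl) _ hf₀ hf₀c⟩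
      · exact fun s hs f hf => ⟨hMideal s hs f hf.1, hLideal s hs f hf.2⟩
    exact hmin M (Set.inter_eq_left.1 hinter) ⟨l, hl⟩ hMideal
end

section
/- Let A be a finite nonempty set, ℓ ≥ 1, and θ_0, …, θ_{ℓ−1} : A → A the column maps of a length-ℓ substitution θ; let S_θ be the subsemigroup of functions A → A generated by {θ_0, …, θ_{ℓ−1}}. For n ≥ 1, let S_{θⁿ} be the subsemigroup generated by all compositions θ_{i_1} ∘ ⋯ ∘ θ_{i_n} of exactly n of the column maps (repetitions allowed), i.e., the semigroup of the substitution θⁿ. Then S_{θⁿ} has exactly one minimal left ideal if and only if S_θ has exactly one minimal left ideal. -/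
/-- Every left ideal of a set of self-maps of a finite type contains a minimal left ideal. -/
lemma exists_minimal_leftIdeal_subset {A : Type*} [Finite A] (S I : Set (A → A))
    (hne : I.Nonempty) (hI : ∀ s ∈ S, ∀ l ∈ I, s ∘ l ∈ I) :
    ∃ L ⊆ I, L.Nonempty ∧ (∀ s ∈ S, ∀ l ∈ L, s ∘ l ∈ L) ∧
      ∀ L' : Set (A → A), L' ⊆ L → L'.Nonempty →
        (∀ s ∈ S, ∀ l ∈ L', s ∘ l ∈ L') → L' = L := by
  obtain ⟨L, hLI, hL⟩ := Set.Finite.exists_le_minimal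
    (Set.toFinite {J : Set (A → A) | J.Nonempty ∧ ∀ s ∈ S, ∀ l ∈ J, s ∘ l ∈ J})
    (a := I) ⟨hne, hI⟩
  exact ⟨L, hLI, hL.1.1, hL.1.2, fun L' hsub h1 h2 => hsub.antisymm (hL.2 ⟨h1, h2⟩ hsub)⟩

/-- A finite semigroup of self-maps has a unique minimal left ideal iff any two of its elements have
a common left multiple. -/
lemma hasUniqueMinimalLeftIdeal_iff {A : Type*} [Finite A] (S : Set (A → A)) (hne : S.Nonempty)
    (hS : ∀ s ∈ S, ∀ t ∈ S, s ∘ t ∈ S) :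
    HasUniqueMinimalLeftIdeal S ↔ ∀ a ∈ S, ∀ b ∈ S, ∃ s ∈ S, ∃ t ∈ S, s ∘ a = t ∘ b := by
  constructor
  · rintro ⟨L, ⟨-, ⟨k, hk⟩, -, -⟩, huniq⟩
    -- The unique minimal left ideal lies in every principal left ideal `S a`.
    have key : ∀ a ∈ S, ∃ s ∈ S, s ∘ a = k := by
      intro a ha
      obtain ⟨M, hM, hM1, hM2, hM3⟩ := exists_minimal_leftIdeal_subset S ((· ∘ a) '' S)
        (hne.image _) (by
          rintro s hs _ ⟨t, ht, rfl⟩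
          exact ⟨s ∘ t, hS s hs t ht, rfl⟩)
      have hMS : M ⊆ S := by
        intro x hx
        obtain ⟨s, hs, rfl⟩ := hM hx
        exact hS s hs a ha
      have hML : M = L := huniq M ⟨hMS, hM1, hM2, hM3⟩
      exact hM (hML ▸ hk)
    intro a ha b hb
    obtain ⟨s, hs, hsa⟩ := key a ha
    obtain ⟨t, ht, htb⟩ := key b hb
    exact ⟨s, hs, t, ht, hsa.trans htb.symm⟩
  · intro h
    obtain ⟨L, hLS, h1, h2, h3⟩ := exists_minimal_leftIdeal_subset S S hne hS
    refine ⟨L, ⟨hLS, h1, h2, h3⟩, ?_⟩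
    rintro M ⟨hMS, ⟨a, ha⟩, hM2, hM3⟩
    obtain ⟨b, hb⟩ := h1
    obtain ⟨s, hs, t, ht, hst⟩ := h a (hMS ha) b (hLS hb)
    have hmeet : (M ∩ L).Nonempty := ⟨s ∘ a, hM2 s hs a ha, hst ▸ h2 t ht b hb⟩
    have hideal : ∀ u ∈ S, ∀ l ∈ M ∩ L, u ∘ l ∈ M ∩ L :=
      fun u hu l hl => ⟨hM2 u hu l hl.1, h2 u hu l hl.2⟩
    exact (hM3 _ Set.inter_subset_left hmeet hideal).symm.trans
      (h3 _ Set.inter_subset_right hmeet hideal)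

/-- The composite `θ_{i_1} ∘ ⋯ ∘ θ_{i_k}` of column maps along a word `i_1 ⋯ i_k`. -/
def wordMap {A : Type*} {ℓ : ℕ} (θ : Fin ℓ → A → A) (l : List (Fin ℓ)) : A → A :=
  (l.map θ).foldr (· ∘ ·) id

lemma wordMap_append {A : Type*} {ℓ : ℕ} (θ : Fin ℓ → A → A) (l l' : List (Fin ℓ)) :
    wordMap θ (l ++ l') = wordMap θ l ∘ wordMap θ l' := by
  induction l with
  | nil => rfl
  | cons i l ih =>
    change θ i ∘ wordMap θ (l ++ l') = (θ i ∘ wordMap θ l) ∘ wordMap θ l'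
    rw [ih, Function.comp_assoc]

/-- The word `l` repeated `m` times. -/
def wordPow {ℓ : ℕ} (m : ℕ) (l : List (Fin ℓ)) : List (Fin ℓ) :=
  (List.replicate m l).flatten

lemma length_wordPow {ℓ : ℕ} (m : ℕ) (l : List (Fin ℓ)) :
    (wordPow m l).length = m * l.length := by
  simp [wordPow]

lemma wordPow_succ {ℓ : ℕ} (m : ℕ) (l : List (Fin ℓ)) :
    wordPow (m + 1) l = wordPow m l ++ l := by
  simp [wordPow, List.replicate_succ']

lemma wordMap_wordPow {A : Type*} {ℓ : ℕ} (θ : Fin ℓ → A → A) (m : ℕ) (l : List (Fin ℓ)) :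
    wordMap θ (wordPow m l) = (wordMap θ l)^[m] := by
  induction m with
  | zero => rfl
  | succ m ih => rw [wordPow_succ, wordMap_append, ih, Function.iterate_succ]

/-- Let θ be a length-ℓ substitution on a finite nonempty
alphabet A, S_θ the subsemigroup generated by its column maps, and, for n ≥ 1,
S_{θⁿ} the subsemigroup generated by all n-fold compositions of column maps
(i.e. composites of a positive multiple of n column maps). Then S_{θⁿ} has
exactly one minimal left ideal iff S_θ has exactly one minimal left ideal. -/
theorem power_unique_minimal_left_ideal_iff
    {A : Type*} [Finite A] [Nonempty A] {ℓ : ℕ} (hℓ : 1 ≤ ℓ)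
    (θ : Fin ℓ → A → A) (n : ℕ) (hn : 1 ≤ n)
    (Sθ Sθn : Set (A → A))
    (hSθ : Sθ = {f | ∃ l : List (Fin ℓ), l ≠ [] ∧ (l.map θ).foldr (· ∘ ·) id = f})
    (hSθn : Sθn = {f | ∃ l : List (Fin ℓ), l ≠ [] ∧ n ∣ l.length ∧
      (l.map θ).foldr (· ∘ ·) id = f}) :
    HasUniqueMinimalLeftIdeal Sθn ↔ HasUniqueMinimalLeftIdeal Sθ := by
  obtain ⟨m, rfl⟩ : ∃ m, n = m + 1 := ⟨n - 1, by omega⟩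
  have memS : ∀ f, f ∈ Sθ ↔ ∃ l : List (Fin ℓ), l ≠ [] ∧ wordMap θ l = f := by
    subst hSθ; exact fun f => Iff.rfl
  have memT : ∀ f, f ∈ Sθn ↔
      ∃ l : List (Fin ℓ), l ≠ [] ∧ (m + 1) ∣ l.length ∧ wordMap θ l = f := by
    subst hSθn; exact fun f => Iff.rfl
  clear hSθ hSθn
  have hpow : ∀ l : List (Fin ℓ), l ≠ [] →
      wordMap θ (wordPow (m + 1) l) ∈ Sθn := by
    intro l hl
    refine (memT _).2 ⟨_, ?_, ?_, rfl⟩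
    · rw [wordPow_succ]; simp [hl]
    · rw [length_wordPow]; exact dvd_mul_right _ _
  have hTne : Sθn.Nonempty := ⟨_, hpow [⟨0, hℓ⟩] (by simp)⟩
  have hSne : Sθ.Nonempty := ⟨_, (memS _).2 ⟨[⟨0, hℓ⟩], by simp, rfl⟩⟩
  have hSmul : ∀ s ∈ Sθ, ∀ t ∈ Sθ, s ∘ t ∈ Sθ := by
    intro s hs t ht
    obtain ⟨ls, hls, rfl⟩ := (memS _).1 hs
    obtain ⟨lt, hlt, rfl⟩ := (memS _).1 ht
    exact (memS _).2 ⟨ls ++ lt, by simp [hls], wordMap_append ..⟩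
  have hTmul : ∀ s ∈ Sθn, ∀ t ∈ Sθn, s ∘ t ∈ Sθn := by
    intro s hs t ht
    obtain ⟨ls, hls, hds, rfl⟩ := (memT _).1 hs
    obtain ⟨lt, hlt, hdt, rfl⟩ := (memT _).1 ht
    exact (memT _).2 ⟨ls ++ lt, by simp [hls],
      by rw [List.length_append]; exact dvd_add hds hdt, wordMap_append ..⟩
  rw [hasUniqueMinimalLeftIdeal_iff _ hTne hTmul, hasUniqueMinimalLeftIdeal_iff _ hSne hSmul]
  constructor
  · intro h a ha b hb
    obtain ⟨la, hla, rfl⟩ := (memS _).1 ha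
    obtain ⟨lb, hlb, rfl⟩ := (memS _).1 hb
    obtain ⟨s, hs, t, ht, hst⟩ := h _ (hpow la hla) _ (hpow lb hlb)
    obtain ⟨ls, hls, -, rfl⟩ := (memT _).1 hs
    obtain ⟨lt, hlt, -, rfl⟩ := (memT _).1 ht
    refine ⟨_, (memS _).2 ⟨ls ++ wordPow m la, by simp [hls], rfl⟩,
      _, (memS _).2 ⟨lt ++ wordPow m lb, by simp [hlt], rfl⟩, ?_⟩
    simpa only [wordPow_succ, wordMap_append, Function.comp_assoc] using hst
  · intro h a ha b hb
    obtain ⟨la, hla, hda, rfl⟩ := (memT _).1 ha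
    obtain ⟨lb, hlb, hdb, rfl⟩ := (memT _).1 hb
    obtain ⟨s, hs, t, ht, hst⟩ := h _ ((memS _).2 ⟨la, hla, rfl⟩) _ ((memS _).2 ⟨lb, hlb, rfl⟩)
    obtain ⟨ls, hls, rfl⟩ := (memS _).1 hs
    obtain ⟨lt, hlt, rfl⟩ := (memS _).1 ht
    -- `(s a)ᵐ s` has length divisible by `m + 1`, since `(s a)ᵐ s a` and `a` do.
    have hdvd : ∀ lx ly : List (Fin ℓ), (m + 1) ∣ ly.length →
        (m + 1) ∣ (wordPow m (lx ++ ly) ++ lx).length := by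
      intro lx ly hd
      refine (Nat.dvd_add_left hd).1 ⟨lx.length + ly.length, ?_⟩
      simp only [List.length_append, length_wordPow]
      ring
    refine ⟨_, (memT _).2 ⟨wordPow m (ls ++ la) ++ ls, by simp [hls], hdvd _ _ hda, rfl⟩,
      _, (memT _).2 ⟨wordPow m (lt ++ lb) ++ lt, by simp [hlt], hdvd _ _ hdb, rfl⟩, ?_⟩
    rw [wordMap_append, wordMap_append, wordMap_wordPow, wordMap_wordPow, Function.comp_assoc,
      Function.comp_assoc, wordMap_append, wordMap_append, hst]
end

section
/- Let A and B be finite nonempty sets, ℓ ≥ 1, θ_0, …, θ_{ℓ−1} : A → A and η_0, …, η_{ℓ−1} : B → B column maps of length-ℓ substitutions θ and η, and β : A → B a surjection with η_m ∘ β = β ∘ θ_m for all m (so η is an inner encoding of θ). Let S_θ and S_η be the subsemigroups of functions generated by the respective column maps. If every a ∈ A lies in the range of some minimal-rank element of S_θ (θ is essentially surjective), then every b ∈ B lies in the range of some minimal-rank element of S_η (η is essentially surjective). -/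
/-!
Evaluating a word in the column maps commutes with the code: `β` intertwines the element of `S_θ`
and the element of `S_η` spelled by the same word (`foldr_comp_code`). Given `b = β a`, let the
word `u` spell a minimal-rank element `f` of `S_θ` with `a` in its range, and let the word `v`
spell a minimal-rank element of `S_η`. The word `uv` does the job. In `S_θ` it spells `f ∘ g` for
some `g`, whose range lies in that of `f` and, by minimality of `f`, equals it, so it contains `a`;
applying `β`, the element of `S_η` spelled by `uv` has `b` in its range. That element is a
composition whose right factor, spelled by `v`, has minimal rank, so its own rank is minimal too.
-/

theorem foldr_comp_append {A : Type*} {ℓ : ℕ} (θ : Fin ℓ → A → A) (u v : List (Fin ℓ)) :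
    ((u ++ v).map θ).foldr (· ∘ ·) id =
      (u.map θ).foldr (· ∘ ·) id ∘ (v.map θ).foldr (· ∘ ·) id := by
  induction u with
  | nil => rfl
  | cons m u ih =>
    simp only [List.cons_append, List.map_cons, List.foldr_cons, ih]
    rfl

theorem foldr_comp_code {A B : Type*} {ℓ : ℕ} {θ : Fin ℓ → A → A} {η : Fin ℓ → B → B}
    {β : A → B} (hcode : ∀ m, η m ∘ β = β ∘ θ m) (u : List (Fin ℓ)) (x : A) :
    (u.map η).foldr (· ∘ ·) id (β x) = β ((u.map θ).foldr (· ∘ ·) id x) := by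
  induction u with
  | nil => rfl
  | cons m u ih =>
    simp only [List.map_cons, List.foldr_cons, Function.comp_apply, ih]
    exact congrFun (hcode m) _

/-- Let θ (on A) and η (on B) be length-ℓ substitutions and
β : A → B a surjection with η_m ∘ β = β ∘ θ_m for all m (an inner encoding).
If θ is essentially surjective (every a ∈ A lies in the range of a
minimal-rank element of S_θ), then η is essentially surjective. -/
theorem inner_encoding_essentially_surjective
    {A B : Type*} [Finite A] [Nonempty A] [Finite B] [Nonempty B]
    {ℓ : ℕ} (hℓ : 1 ≤ ℓ)
    (θ : Fin ℓ → A → A) (η : Fin ℓ → B → B)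
    (β : A → B) (hβ : Function.Surjective β)
    (hcode : ∀ m, η m ∘ β = β ∘ θ m)
    (hθ : ∀ a : A, ∃ f ∈ substSemigroup θ,
      (∀ g ∈ substSemigroup θ, (Set.range f).ncard ≤ (Set.range g).ncard) ∧
      a ∈ Set.range f) :
    ∀ b : B, ∃ f ∈ substSemigroup η,
      (∀ g ∈ substSemigroup η, (Set.range f).ncard ≤ (Set.range g).ncard) ∧
      b ∈ Set.range f := by
  intro b
  obtain ⟨a, rfl⟩ := hβ b
  obtain ⟨_, ⟨u, hu, rfl⟩, hmin, ha⟩ := hθ a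
  have hne : (substSemigroup η).Nonempty := ⟨_, u, hu, rfl⟩
  obtain ⟨_, ⟨v, hv, rfl⟩, hvmin⟩ : ∃ h ∈ substSemigroup η, ∀ g ∈ substSemigroup η,
      (Set.range h).ncard ≤ (Set.range g).ncard := by
    obtain ⟨h, hh, hle⟩ := exists_minimalFor_of_wellFoundedLT (· ∈ substSemigroup η)
      (fun g => (Set.range g).ncard) hne
    exact ⟨h, hh, fun g hg => (le_total _ _).elim id (hle hg)⟩
  have huv : u ++ v ≠ [] := by simp [hu]
  refine ⟨_, ⟨u ++ v, huv, rfl⟩, fun g hg => le_trans ?_ (hvmin g hg), ?_⟩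
  · rw [foldr_comp_append, Set.range_comp]
    exact Set.ncard_image_le (Set.toFinite _)
  · -- By minimality of the rank of `u`, the words `u` and `u ++ v` have the same range in `S_θ`.
    have hrange : Set.range (((u ++ v).map θ).foldr (· ∘ ·) id) =
        Set.range ((u.map θ).foldr (· ∘ ·) id) := by
      refine Set.eq_of_subset_of_ncard_le ?_ (hmin _ ⟨u ++ v, huv, rfl⟩) (Set.toFinite _)
      rw [foldr_comp_append]
      exact Set.range_comp_subset_range _ _
    rw [← hrange] at ha
    obtain ⟨x, rfl⟩ := ha
    exact ⟨β x, foldr_comp_code hcode _ x⟩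
end
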